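/- arXiv:1808.01823 — 4 statements merged into one kernel-verified Lean document; each statement's English description precedes it below -/
import Mathlib

section
/- Let A = M_{n_1}(ℂ) × ⋯ × M_{n_k}(ℂ) with coordinatewise operations, and suppose a = (a_1, …, a_k) ∈ A is a maximal finite-rank element of A, i.e. #σ'(xa) ≤ #σ'(a) for all x ∈ A. Then the nonzero spectra of the components are pairwise disjoint: σ'(a_i) ∩ σ'(a_j) = ∅ whenever i ≠ j. -/
/-! Multiplying the `i`-th component of `a` by a scalar `c ≠ 0` dilates its nonzero spectrum `S` by
`c` and keeps the union `T` of the other nonzero spectra. Since `S` and `T` are finite, some `c`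
moves `S` off `T`. Then maximality of `a` gives `#S + #T = #(c • S ∪ T) ≤ #(S ∪ T)`, which forces
`S` and `T` to be disjoint already. -/

open scoped Pointwise

section Dilation

lemma disjoint_of_encard_add_encard_le {α : Type*} {S T : Set α} (hfin : (S ∪ T).Finite)
    (hle : S.encard + T.encard ≤ (S ∪ T).encard) : Disjoint S T := by
  rw [← Set.encard_union_add_encard_inter] at hle
  have hinter : (S ∩ T).encard ≤ 0 :=
    (ENat.add_le_add_iff_left hfin.encard_lt_top.ne).1 (hle.trans_eq (add_zero _).symm)
  exact Set.disjoint_iff_inter_eq_empty.2 (Set.encard_eq_zero.1 (nonpos_iff_eq_zero.1 hinter))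

variable {K : Type*} [GroupWithZero K] [Infinite K] {S T : Set K}

lemma exists_units_disjoint_smul (hS : S.Finite) (hT : T.Finite) (h0 : (0 : K) ∉ S) :
    ∃ c : Kˣ, Disjoint (c • S) T := by
  obtain ⟨c, hc⟩ := ((hT.image2 (· / ·) hS).insert 0).exists_notMem
  obtain ⟨hc0, hcdiv⟩ := not_or.1 hc
  refine ⟨Units.mk0 c hc0, Set.disjoint_left.2 ?_⟩
  rintro _ ⟨s, hs, rfl⟩ hcs
  exact hcdiv ⟨c * s, hcs, s, hs, mul_div_cancel_right₀ c (ne_of_mem_of_not_mem hs h0)⟩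

lemma disjoint_of_forall_encard_smul_union_le (hfin : (S ∪ T).Finite) (h0 : (0 : K) ∉ S)
    (hle : ∀ c : Kˣ, (c • S ∪ T).encard ≤ (S ∪ T).encard) : Disjoint S T := by
  obtain ⟨hS, hT⟩ := Set.finite_union.1 hfin
  obtain ⟨c, hc⟩ := exists_units_disjoint_smul hS hT h0
  refine disjoint_of_encard_add_encard_le hfin ?_
  calc S.encard + T.encard = (c • S ∪ T).encard := by
        rw [Set.encard_union_eq hc, Set.encard_smul_set]
    _ ≤ (S ∪ T).encard := hle c

end Dilation

section NonzeroSpectrum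

variable (K : Type*) [CommSemiring K]

/-- The nonzero spectrum `σ'(a)` of an element `a` of an algebra. -/
def nonzeroSpectrum {A : Type*} [Ring A] [Algebra K A] (a : A) : Set K :=
  spectrum K a \ {0}

/-- Maximal finite-rank elements: `σ'(a)` is finite, and no left multiple `x * a` has more nonzero
spectral values. Cardinalities are taken in `ℕ∞`, so that an infinite `σ'(x * a)` counts as
larger. -/
structure IsMaximalFiniteRank {A : Type*} [Ring A] [Algebra K A] (a : A) : Prop where
  finite : (nonzeroSpectrum K a).Finite
  encard_mul_le (x : A) : (nonzeroSpectrum K (x * a)).encard ≤ (nonzeroSpectrum K a).encard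

variable {K}

lemma nonzeroSpectrum_units_smul {A : Type*} [Ring A] [Algebra K A] (c : Kˣ) (a : A) :
    nonzeroSpectrum K (c • a) = c • nonzeroSpectrum K a := by
  simp only [nonzeroSpectrum, spectrum.unit_smul_eq_smul, Set.smul_set_sdiff,
    Set.smul_set_singleton, smul_zero]

variable {ι : Type*} {A : ι → Type*} [∀ j, Ring (A j)] [∀ j, Algebra K (A j)]

lemma nonzeroSpectrum_pi (a : ∀ j, A j) :
    nonzeroSpectrum K a = ⋃ j, nonzeroSpectrum K (a j) := by
  simp only [nonzeroSpectrum, Pi.spectrum_eq, Set.iUnion_sdiff]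

lemma finite_nonzeroSpectrum_pi [Finite ι] {a : ∀ j, A j}
    (ha : ∀ j, (nonzeroSpectrum K (a j)).Finite) : (nonzeroSpectrum K a).Finite :=
  (nonzeroSpectrum_pi (K := K) a).symm ▸ Set.finite_iUnion ha

lemma nonzeroSpectrum_update [DecidableEq ι] (a : ∀ j, A j) (i : ι) (b : A i) :
    nonzeroSpectrum K (Function.update a i b) =
      nonzeroSpectrum K b ∪ ⋃ (j) (_ : j ≠ i), nonzeroSpectrum K (a j) := by
  rw [nonzeroSpectrum_pi]
  refine (iSup_split_single _ i).trans (congrArg₂ _ ?_ (Set.iUnion₂_congr fun j hj => ?_))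
  · rw [Function.update_self]
  · rw [Function.update_of_ne hj]

lemma nonzeroSpectrum_update_one_units_smul_mul [DecidableEq ι] (c : Kˣ) (a : ∀ j, A j) (i : ι) :
    nonzeroSpectrum K (Function.update (1 : ∀ j, A j) i (c • 1) * a) =
      c • nonzeroSpectrum K (a i) ∪ ⋃ (j) (_ : j ≠ i), nonzeroSpectrum K (a j) := by
  have hmul : Function.update (1 : ∀ j, A j) i (c • 1) * a = Function.update a i (c • a i) := by
    simpa only [one_mul, smul_one_mul, Function.update_eq_self] using
      (Function.update_mul 1 a i (c • 1) (a i)).symm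
  rw [hmul, nonzeroSpectrum_update, nonzeroSpectrum_units_smul]

end NonzeroSpectrum

theorem components_disjoint_spectra_general {K ι : Type*} [Field K] [Infinite K]
    {A : ι → Type*} [∀ j, Ring (A j)] [∀ j, Algebra K (A j)] {a : ∀ j, A j}
    (ha : IsMaximalFiniteRank K a) {i j : ι} (hij : i ≠ j) :
    Disjoint (nonzeroSpectrum K (a i)) (nonzeroSpectrum K (a j)) := by
  classical
  set T := ⋃ (l) (_ : l ≠ i), nonzeroSpectrum K (a l) with hT
  have hsplit : nonzeroSpectrum K a = nonzeroSpectrum K (a i) ∪ T := by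
    rw [hT, ← nonzeroSpectrum_update, Function.update_eq_self]
  have hdisj : Disjoint (nonzeroSpectrum K (a i)) T := by
    refine disjoint_of_forall_encard_smul_union_le (hsplit ▸ ha.finite) (fun h => h.2 rfl)
      fun c => ?_
    rw [hT, ← nonzeroSpectrum_update_one_units_smul_mul, ← hT, ← hsplit]
    exact ha.encard_mul_le _
  exact hdisj.mono_right (Set.subset_iUnion₂ (s := fun l _ => nonzeroSpectrum K (a l)) j hij.symm)

/-- If `a = (a_1, …, a_k)` is a maximal finite-rank element of the product of
matrix algebras `A = M_{n_1}(ℂ) × ⋯ × M_{n_k}(ℂ)`, then the nonzero spectra of the components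
are pairwise disjoint. -/
theorem components_disjoint_spectra (k : ℕ) (hk : 0 < k) (n : Fin k → ℕ) (hn : ∀ j, 0 < n j)
    (a : ∀ j, Matrix (Fin (n j)) (Fin (n j)) ℂ)
    (hmax : ∀ x : ∀ j, Matrix (Fin (n j)) (Fin (n j)) ℂ,
      (spectrum ℂ (x * a) \ {0}).encard ≤ (spectrum ℂ a \ {0}).encard)
    (i j : Fin k) (hij : i ≠ j) :
    (spectrum ℂ (a i) \ {0}) ∩ (spectrum ℂ (a j) \ {0}) = ∅ := by
  have hfin := finite_nonzeroSpectrum_pi fun l => (Matrix.finite_spectrum (a l)).sdiff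
  exact (components_disjoint_spectra_general ⟨hfin, hmax⟩ hij).inter_eq
end

section
/- Let A = M_{n_1}(ℂ) × ⋯ × M_{n_k}(ℂ) with coordinatewise operations, and suppose a = (a_1, …, a_k) ∈ A is invertible and is a maximal finite-rank element of A, i.e. #σ'(xa) ≤ #σ'(a) for all x ∈ A. Then every spectral value of a has spectral multiplicity one, and for all λ ∈ ℂ the generalized characteristic polynomial of a satisfies ∏_{α ∈ σ(a)} (α − λ) = ∏_{j=1}^k det(a_j − λ·I_{n_j}), where det denotes the classical determinant and I_{n_j} is the n_j × n_j identity matrix. -/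
/-!
If `a` is a unit, then every element `b` is of the form `x * a`, so a maximal `a` has at least as
many nonzero spectral values as any other element of the algebra. Over a field with more than
`N = n_1 + ⋯ + n_k` elements, some tuple of diagonal matrices has `N` distinct nonzero diagonal
entries, so `a` has at least `N` spectral values. These are roots of `∏_j charpoly(a_j)`, which is
monic of degree `N`; hence that polynomial is the product of the `X - α` over `α ∈ σ(a)`.
-/

theorem exists_injective_forall_ne_of_card_lt {α β : Type*} (hcard : ENat.card α < ENat.card β)
    (b : β) : ∃ f : α → β, Function.Injective f ∧ ∀ x, f x ≠ b := by
  have : Nonempty β := ⟨b⟩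
  have : Finite α := ENat.card_lt_top.mp (hcard.trans_le le_top)
  have hle : (Set.univ : Set α).encard ≤ ({b}ᶜ : Set β).encard := by
    refine Order.le_of_lt_add_one ?_
    rwa [Set.compl_eq_univ_sdiff, Set.encard_sdiff_singleton_add_one (Set.mem_univ b),
      Set.encard_univ, Set.encard_univ]
  obtain ⟨f, hmaps, hinj⟩ := Set.finite_univ.exists_injOn_of_encard_le hle
  exact ⟨f, Set.injOn_univ.mp hinj, fun x => hmaps (Set.mem_univ x)⟩

theorem encard_spectrum_diff_zero_le_of_isUnit_of_forall_mul_le {R A : Type*} [CommSemiring R]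
    [Ring A] [Algebra R A] {a : A} (ha : IsUnit a)
    (hmax : ∀ x : A, (spectrum R (x * a) \ {0}).encard ≤ (spectrum R a \ {0}).encard) (b : A) :
    (spectrum R b \ {0}).encard ≤ (spectrum R a \ {0}).encard := by
  obtain ⟨u, rfl⟩ := ha
  simpa only [Units.inv_mul_cancel_right] using hmax (b * ↑u⁻¹)

open Polynomial Finset in
theorem eq_prod_X_sub_C_of_monic_of_natDegree_le_card {R : Type*} [CommRing R] [IsDomain R]
    {p : R[X]} (hp : p.Monic) {s : Finset R} (hroot : ∀ α ∈ s, p.IsRoot α)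
    (hcard : p.natDegree ≤ #s) : p = ∏ α ∈ s, (X - C α) := by
  have hdvd : ∏ α ∈ s, (X - C α) ∣ p :=
    (Multiset.prod_X_sub_C_dvd_iff_le_roots hp.ne_zero s.val).mpr <|
      (Multiset.le_iff_subset s.nodup).mpr fun α hα => (mem_roots hp.ne_zero).mpr (hroot α hα)
  refine eq_of_monic_of_dvd_of_natDegree_le (monic_prod_X_sub_C _ s) hp hdvd ?_
  rwa [natDegree_finsetProd_X_sub_C_eq_card]

section MatrixTuples

open Polynomial Finset

variable {ι : Type*} {m : ι → Type*} [∀ j, Fintype (m j)] [∀ j, DecidableEq (m j)]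

section Spectrum

variable {K : Type*} [Field K]

theorem finite_spectrum_pi_matrix [Finite ι] (a : ∀ j, Matrix (m j) (m j) K) :
    (spectrum K a).Finite := by
  rw [Pi.spectrum_eq]
  exact Set.finite_iUnion fun j => (a j).finite_spectrum

theorem spectrum_pi_diagonal (d : (Σ j, m j) → K) :
    spectrum K (fun j => Matrix.diagonal fun i => d ⟨j, i⟩) = Set.range d := by
  simp only [Pi.spectrum_eq, spectrum_diagonal, Set.range_sigma_eq_iUnion_range]

end Spectrum

variable [Fintype ι]

/-- The characteristic polynomial of a tuple of square matrices, that is, of the block diagonal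
matrix with these blocks. Over a field, its roots are the spectral values of the tuple, counted with
algebraic multiplicity. -/
noncomputable def piCharpoly {R : Type*} [CommRing R] (a : ∀ j, Matrix (m j) (m j) R) : R[X] :=
  ∏ j, (a j).charpoly

section CommRing

variable {R : Type*} [CommRing R] (a : ∀ j, Matrix (m j) (m j) R)

theorem piCharpoly_monic : (piCharpoly a).Monic :=
  monic_prod_of_monic _ _ fun j _ => (a j).charpoly_monic

theorem natDegree_piCharpoly [Nontrivial R] :
    (piCharpoly a).natDegree = ∑ j, Fintype.card (m j) := by
  rw [piCharpoly, natDegree_prod_of_monic _ _ fun j _ => (a j).charpoly_monic]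
  simp only [Matrix.charpoly_natDegree_eq_dim]

theorem prod_det_sub_smul_one (μ : R) :
    ∏ j, (a j - μ • (1 : Matrix (m j) (m j) R)).det =
      (-1) ^ (∑ j, Fintype.card (m j)) * (piCharpoly a).eval μ := by
  rw [piCharpoly, eval_prod, ← prod_pow_eq_pow_sum, ← prod_mul_distrib]
  refine prod_congr rfl fun j _ => ?_
  rw [Matrix.eval_charpoly, ← Matrix.det_neg, neg_sub, Matrix.scalar_apply,
    Matrix.smul_one_eq_diagonal]

end CommRing

section Field

variable {K : Type*} [Field K]

theorem mem_spectrum_pi_iff_isRoot_piCharpoly {a : ∀ j, Matrix (m j) (m j) K} {μ : K} :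
    μ ∈ spectrum K a ↔ (piCharpoly a).IsRoot μ := by
  simp only [Pi.spectrum_eq, Set.mem_iUnion, Matrix.mem_spectrum_iff_isRoot_charpoly, piCharpoly,
    isRoot_prod, Finset.mem_univ, true_and]

theorem piCharpoly_eq_prod_X_sub_C {a : ∀ j, Matrix (m j) (m j) K} {s : Finset K}
    (hs : (s : Set K) = spectrum K a) (hcard : ∑ j, Fintype.card (m j) ≤ #s) :
    piCharpoly a = ∏ α ∈ s, (X - C α) := by
  refine eq_prod_X_sub_C_of_monic_of_natDegree_le_card (piCharpoly_monic a) (fun α hα => ?_) ?_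
  · rwa [← mem_spectrum_pi_iff_isRoot_piCharpoly, ← hs, mem_coe]
  · rwa [natDegree_piCharpoly]

theorem exists_encard_spectrum_pi_diff_zero_eq
    (hK : ((∑ j, Fintype.card (m j) : ℕ) : ℕ∞) < ENat.card K) :
    ∃ b : ∀ j, Matrix (m j) (m j) K,
      (spectrum K b \ {0}).encard = ((∑ j, Fintype.card (m j) : ℕ) : ℕ∞) := by
  rw [← Fintype.card_sigma, ← ENat.card_eq_coe_fintype_card] at hK ⊢
  obtain ⟨d, hd, hd_ne⟩ := exists_injective_forall_ne_of_card_lt hK 0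
  have hzero : (0 : K) ∉ Set.range d := fun ⟨p, hp⟩ => hd_ne p hp
  refine ⟨fun j => Matrix.diagonal fun i => d ⟨j, i⟩, ?_⟩
  rw [spectrum_pi_diagonal, Set.sdiff_singleton_eq_self hzero, ← Set.image_univ,
    hd.encard_image, Set.encard_univ]

theorem char_poly_eq_prod_det_general
    (hK : ((∑ j, Fintype.card (m j) : ℕ) : ℕ∞) < ENat.card K)
    (a : ∀ j, Matrix (m j) (m j) K) (ha : IsUnit a)
    (hmax : ∀ x : ∀ j, Matrix (m j) (m j) K,
      (spectrum K (x * a) \ {0}).encard ≤ (spectrum K a \ {0}).encard) :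
    (spectrum K a).encard = ((∑ j, Fintype.card (m j) : ℕ) : ℕ∞) ∧
      ∀ μ : K, (∏ᶠ α ∈ spectrum K a, (α - μ)) =
        ∏ j, Matrix.det (a j - μ • (1 : Matrix (m j) (m j) K)) := by
  obtain ⟨s, hs⟩ := (finite_spectrum_pi_matrix a).exists_finset_coe
  obtain ⟨b, hb⟩ := exists_encard_spectrum_pi_diff_zero_eq hK
  have hle : ∑ j, Fintype.card (m j) ≤ #s := by
    rw [← Nat.cast_le (α := ℕ∞), ← hb, ← Set.encard_coe_eq_coe_finsetCard, hs]
    exact (encard_spectrum_diff_zero_le_of_isUnit_of_forall_mul_le ha hmax b).trans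
      (Set.encard_le_encard Set.sdiff_subset)
  have hprod : piCharpoly a = ∏ α ∈ s, (X - C α) := piCharpoly_eq_prod_X_sub_C hs hle
  have hcard : #s = ∑ j, Fintype.card (m j) := by
    rw [← natDegree_piCharpoly a, hprod, natDegree_finsetProd_X_sub_C_eq_card]
  refine ⟨by rw [← hs, Set.encard_coe_eq_coe_finsetCard, hcard], fun μ => ?_⟩
  calc ∏ᶠ α ∈ spectrum K a, (α - μ)
      = ∏ α ∈ s, -(μ - α) := by simp only [← hs, finprod_mem_coe_finset, neg_sub]
    _ = (-1) ^ (∑ j, Fintype.card (m j)) * (piCharpoly a).eval μ := by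
        simp only [prod_neg, hcard, hprod, eval_prod, eval_sub, eval_X, eval_C]
    _ = ∏ j, Matrix.det (a j - μ • (1 : Matrix (m j) (m j) K)) :=
        (prod_det_sub_smul_one a μ).symm

end Field

end MatrixTuples

/-- If `a = (a_1, …, a_k)` is an invertible maximal finite-rank element of the
product of matrix algebras `A = M_{n_1}(ℂ) × ⋯ × M_{n_k}(ℂ)`, then every spectral value of
`a` has spectral multiplicity one (equivalently, `a` has `n_1 + ⋯ + n_k` distinct spectral
values), and the generalized characteristic polynomial of `a` satisfies
`∏_{α ∈ σ(a)} (α − λ) = ∏_j det(a_j − λ·I)` for all `λ ∈ ℂ`. -/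
theorem char_poly_eq_prod_det (k : ℕ) (hk : 0 < k) (n : Fin k → ℕ) (hn : ∀ j, 0 < n j)
    (a : ∀ j, Matrix (Fin (n j)) (Fin (n j)) ℂ) (ha : IsUnit a)
    (hmax : ∀ x : ∀ j, Matrix (Fin (n j)) (Fin (n j)) ℂ,
      (spectrum ℂ (x * a) \ {0}).encard ≤ (spectrum ℂ a \ {0}).encard) :
    (spectrum ℂ a).encard = ((∑ j, n j : ℕ) : ℕ∞) ∧
      ∀ μ : ℂ, (∏ᶠ α ∈ spectrum ℂ a, (α - μ)) =
        ∏ j, Matrix.det (a j - μ • (1 : Matrix (Fin (n j)) (Fin (n j)) ℂ)) := by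
  simpa only [Fintype.card_fin] using
    char_poly_eq_prod_det_general (by simp [ENat.card_eq_top_of_infinite]) a ha hmax
end

section
/- Let A be a semisimple complex unital Banach algebra with identity 1, and let a ∈ A be a maximal finite-rank element, i.e. σ'(a) is finite and #σ'(xa) ≤ #σ'(a) for all x ∈ A. Then a · ∏_{α ∈ σ'(a)} (a − α·1) = 0. (This is the Generalized Cayley–Hamilton Theorem p_a(a) = 0 for maximal finite-rank elements, whose nonzero spectral values all have spectral multiplicity one.) -/
/-!
Write `p = X ∏ (X - α)` over the nonzero spectral values `α` of `a`, and `q = p / X`. If `p(a)` is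
outside the Jacobson radical, then any new scalar `l` can be forced into the spectrum of
`a + b p(a) = (1 + b q(a)) a` by a choice of `b`. When no `α - a` is left invertible, every `α`
stays in that spectrum, since `α - a - b p(a)` is a left multiple of `α - a`; so there are too many
spectral values.

When some `s = α - a` has a left inverse `y` but is not a unit, the elements
`sᵏ (1 - s y) yᵏ` are infinitely many nonzero orthogonal idempotents, as for the one-sided shift.
Since `α ≠ 0` they lie in the left ideal `A a`, and so do their linear combinations, which have
arbitrarily many nonzero spectral values.
-/

open Polynomial

section Spectrum

variable {R A : Type*} [CommSemiring R] [Ring A] [Algebra R A]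

theorem mem_spectrum_of_mul_eq_smul {a v : A} {r : R} (hv : v ≠ 0) (h : a * v = r • v) :
    r ∈ spectrum R a := fun hunit =>
  hv <| (hunit.mul_right_eq_zero (b := v)).mp <| by rw [sub_mul, h, Algebra.smul_def, sub_self]

theorem mem_spectrum_sum_smul_of_orthogonalIdempotents {ι : Type*} {g : ι → A}
    (hg : OrthogonalIdempotents g) (c : ι → R) {S : Finset ι} {i : ι} (hi : i ∈ S) (hne : g i ≠ 0) :
    c i ∈ spectrum R (∑ j ∈ S, c j • g j) := by
  classical
  refine mem_spectrum_of_mul_eq_smul hne ?_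
  rw [Finset.sum_mul, Finset.sum_eq_single_of_mem i hi, smul_mul_assoc, hg.idem i]
  intro j _ hji
  rw [smul_mul_assoc, hg.ortho hji, smul_zero]

theorem exists_mem_spectrum_add_mul {c : A} (hc : c ∉ (⊥ : Ideal A).jacobson) (a : A) (r : R) :
    ∃ b : A, r ∈ spectrum R (a + b * c) := by
  by_cases hr : r ∈ spectrum R a
  · exact ⟨0, by rwa [zero_mul, add_zero]⟩
  obtain ⟨y, hy⟩ : ∃ y, ∀ z, z * y * c + z - 1 ∉ (⊥ : Ideal A) := by
    simpa only [Ideal.mem_jacobson_iff, not_forall, not_exists] using hc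
  have hnot : ¬ IsUnit (y * c + 1) := fun hunit => by
    obtain ⟨z, hz⟩ := hunit.exists_left_inv
    refine hy z ((Submodule.mem_bot A).mpr ?_)
    rw [mul_assoc, ← mul_add_one, hz, sub_self]
  refine ⟨-((algebraMap R A r - a) * y), fun hunit => hnot ?_⟩
  have hfactor : algebraMap R A r - (a + -((algebraMap R A r - a) * y) * c) =
      (algebraMap R A r - a) * (y * c + 1) := by noncomm_ring
  rw [spectrum.mem_resolventSet_iff, hfactor] at hunit
  exact (spectrum.notMem_iff.mp hr).mul_left_iff.mp hunit

end Spectrum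

section ShiftIdempotents

variable {A : Type*} [Ring A] {s y : A}

/-- The diagonal matrix units of the one-sided shift `s` with left inverse `y`: when `y * s = 1`,
this is the projection onto the `k`-th translate `sᵏ (ker y)` of the defect space `ker y`. -/
def shiftIdempotent (s y : A) (k : ℕ) : A := s ^ k * (1 - s * y) * y ^ k

theorem mul_one_sub_mul_eq_zero (h : y * s = 1) : y * (1 - s * y) = 0 := by
  rw [mul_sub, mul_one, ← mul_assoc, h, one_mul, sub_self]

theorem one_sub_mul_mul_eq_zero (h : y * s = 1) : (1 - s * y) * s = 0 := by
  rw [sub_mul, one_mul, mul_assoc, h, mul_one, sub_self]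

theorem isIdempotentElem_one_sub_mul (h : y * s = 1) : IsIdempotentElem (1 - s * y) := by
  rw [IsIdempotentElem, sub_mul (1 : A), one_mul, mul_assoc, mul_one_sub_mul_eq_zero h, mul_zero,
    sub_zero]

theorem one_sub_mul_mul_pow_mul_pow_eq_zero (h : y * s = 1) {i j : ℕ} (hij : i ≠ j) :
    (1 - s * y) * (y ^ i * s ^ j) * (1 - s * y) = 0 := by
  rcases hij.lt_or_gt with hlt | hlt
  · obtain ⟨d, rfl⟩ := Nat.exists_eq_add_of_lt hlt
    have hpow : y ^ i * s ^ (i + d + 1) = s * s ^ d := by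
      rw [add_assoc, pow_add, ← mul_assoc, pow_mul_pow_eq_one i h, one_mul, pow_succ']
    rw [hpow, ← mul_assoc, one_sub_mul_mul_eq_zero h, zero_mul, zero_mul]
  · obtain ⟨d, rfl⟩ := Nat.exists_eq_add_of_lt hlt
    have hpow : y ^ (j + d + 1) * s ^ j = y ^ d * y := by
      rw [add_assoc, add_comm, pow_add, mul_assoc, pow_mul_pow_eq_one j h, mul_one, pow_succ]
    rw [hpow, mul_assoc, mul_assoc, mul_one_sub_mul_eq_zero h, mul_zero, mul_zero]

theorem orthogonalIdempotents_shiftIdempotent (h : y * s = 1) :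
    OrthogonalIdempotents (shiftIdempotent s y) := by
  have hmul (i j : ℕ) : shiftIdempotent s y i * shiftIdempotent s y j =
      s ^ i * ((1 - s * y) * (y ^ i * s ^ j) * (1 - s * y)) * y ^ j := by
    simp only [shiftIdempotent, mul_assoc]
  refine ⟨fun i => ?_, fun i j hij => ?_⟩
  · rw [IsIdempotentElem, hmul, pow_mul_pow_eq_one i h, mul_one,
      (isIdempotentElem_one_sub_mul h).eq, shiftIdempotent]
  · exact (hmul i j).trans <| by
      rw [one_sub_mul_mul_pow_mul_pow_eq_zero h hij, mul_zero, zero_mul]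

theorem shiftIdempotent_ne_zero (h : y * s = 1) (hsy : s * y ≠ 1) (k : ℕ) :
    shiftIdempotent s y k ≠ 0 := by
  intro hk
  have hcompress : y ^ k * shiftIdempotent s y k * s ^ k = 1 - s * y := by
    calc y ^ k * shiftIdempotent s y k * s ^ k
        = y ^ k * s ^ k * (1 - s * y) * (y ^ k * s ^ k) := by
          simp only [shiftIdempotent, mul_assoc]
      _ = 1 - s * y := by rw [pow_mul_pow_eq_one k h, one_mul, mul_one]
  rw [hk, mul_zero, zero_mul] at hcompress
  exact hsy (sub_eq_zero.mp hcompress.symm).symm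

end ShiftIdempotents

section LeftInvertible

variable {K A : Type*} [Field K] [Ring A] [Algebra K A] {a y : A} {m : K}

theorem mem_span_singleton_of_mul_algebraMap_sub_mem (hm : m ≠ 0) {v : A}
    (hv : v * (algebraMap K A m - a) ∈ Ideal.span {a}) : v ∈ Ideal.span {a} := by
  have hmv : m • v ∈ Ideal.span {a} := by
    have hsum : m • v = v * (algebraMap K A m - a) + v * a := by
      rw [mul_sub, sub_add_cancel, ← Algebra.commutes, Algebra.smul_def]
    rw [hsum]
    exact add_mem hv (Ideal.mul_mem_left _ v (Ideal.mem_span_singleton_self a))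
  rw [← inv_smul_smul₀ hm v]
  exact Submodule.smul_of_tower_mem _ m⁻¹ hmv

theorem shiftIdempotent_mem_span_singleton (hm : m ≠ 0) (h : y * (algebraMap K A m - a) = 1)
    (k : ℕ) : shiftIdempotent (algebraMap K A m - a) y k ∈ Ideal.span {a} := by
  rw [shiftIdempotent, mul_assoc]
  refine Ideal.mul_mem_left _ _ ?_
  induction k with
  | zero =>
    refine mem_span_singleton_of_mul_algebraMap_sub_mem hm ?_
    rw [pow_zero, mul_one, one_sub_mul_mul_eq_zero h]
    exact zero_mem _
  | succ k ih =>
    refine mem_span_singleton_of_mul_algebraMap_sub_mem hm ?_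
    rwa [pow_succ, mul_assoc, mul_assoc, h, mul_one]

theorem exists_subset_spectrum_mul_of_left_inverse (hm : m ≠ 0)
    (h : y * (algebraMap K A m - a) = 1) (hne : (algebraMap K A m - a) * y ≠ 1) (T : Finset K) :
    ∃ x : A, (T : Set K) ⊆ spectrum K (x * a) := by
  let e : T ↪ ℕ := T.equivFin.toEmbedding.trans Fin.valEmbedding
  have hg := (orthogonalIdempotents_shiftIdempotent h).embedding e
  have hsum : ∑ t : T, (t : K) • shiftIdempotent (algebraMap K A m - a) y (e t) ∈
      Ideal.span {a} := sum_mem fun t _ =>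
    Submodule.smul_of_tower_mem _ (t : K) (shiftIdempotent_mem_span_singleton hm h (e t))
  obtain ⟨x, hx⟩ := Ideal.mem_span_singleton'.mp hsum
  refine ⟨x, fun t ht => hx ▸ ?_⟩
  exact mem_spectrum_sum_smul_of_orthogonalIdempotents hg Subtype.val
    (Finset.mem_univ ⟨t, ht⟩) (shiftIdempotent_ne_zero h hne _)

theorem isUnit_algebraMap_sub_of_left_inverse [Infinite K] {n : ℕ}
    (hrank : ∀ x : A, (spectrum K (x * a) \ {0}).encard ≤ n) (hm : m ≠ 0)
    (h : y * (algebraMap K A m - a) = 1) : IsUnit (algebraMap K A m - a) := by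
  by_contra hunit
  obtain ⟨T, hT, hcard⟩ :=
    (Set.finite_singleton (0 : K)).infinite_compl.exists_subset_card_eq (n + 1)
  obtain ⟨x, hx⟩ := exists_subset_spectrum_mul_of_left_inverse hm h
    (fun hr => hunit ⟨⟨_, y, hr, h⟩, rfl⟩) T
  have hsub : (T : Set K) ⊆ spectrum K (x * a) \ {0} := fun c hc => ⟨hx hc, hT hc⟩
  have hle := (Set.encard_le_encard hsub).trans (hrank x)
  rw [Set.encard_coe_eq_coe_finsetCard, hcard, Nat.cast_le] at hle
  exact n.not_succ_le_self hle

end LeftInvertible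

section Perturbation

variable {R A : Type*} [CommRing R] [Ring A] [Algebra R A]

theorem mem_spectrum_add_mul_aeval {a : A} {r : R} (hr : ∀ y, y * (algebraMap R A r - a) ≠ 1)
    {p : R[X]} (hp : X - C r ∣ p) (b : A) : r ∈ spectrum R (a + b * aeval a p) := by
  intro hunit
  obtain ⟨p', rfl⟩ := hp
  have hfactor : algebraMap R A r - (a + b * aeval a ((X - C r) * p')) =
      (1 + b * aeval a p') * (algebraMap R A r - a) := by
    rw [mul_comm, map_mul, map_sub, aeval_X, aeval_C]
    noncomm_ring
  obtain ⟨z, hz⟩ := hunit.exists_left_inv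
  rw [hfactor, ← mul_assoc] at hz
  exact hr _ hz

end Perturbation

theorem cayley_hamilton_maximal_general {K A : Type*} [Field K] [Infinite K] [Ring A] [Algebra K A]
    (a : A) (hfin : (spectrum K a \ {0}).Finite)
    (hmax : ∀ x : A, (spectrum K (x * a) \ {0}).encard ≤ (spectrum K a \ {0}).encard) :
    aeval a (X * ∏ α ∈ hfin.toFinset, (X - C α)) ∈ (⊥ : Ideal A).jacobson := by
  set q : K[X] := ∏ α ∈ hfin.toFinset, (X - C α)
  by_contra hp
  obtain ⟨l, hl⟩ := (hfin.insert 0).exists_notMem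
  obtain ⟨hl₀, hlσ⟩ := not_or.mp hl
  obtain ⟨b, hb⟩ := exists_mem_spectrum_add_mul hp a l
  have hmul : (1 + b * aeval a q) * a = a + b * aeval a (X * q) := by
    rw [mul_comm X q, map_mul, aeval_X, add_mul, one_mul, mul_assoc]
  have hsub : insert l (spectrum K a \ {0}) ⊆ spectrum K ((1 + b * aeval a q) * a) \ {0} := by
    rw [hmul]
    rintro m (rfl | hm)
    · exact ⟨hb, hl₀⟩
    · have hleft (y : A) : y * (algebraMap K A m - a) ≠ 1 := fun hy =>
        hm.1 <| isUnit_algebraMap_sub_of_left_inverse (fun x =>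
          (hmax x).trans_eq hfin.encard_eq_coe_toFinset_card) hm.2 hy
      have hdvd : X - C m ∣ X * q :=
        (Finset.dvd_prod_of_mem (fun α => X - C α) (hfin.mem_toFinset.mpr hm)).mul_left X
      exact ⟨mem_spectrum_add_mul_aeval hleft hdvd b, hm.2⟩
  have hcard := (Set.encard_le_encard hsub).trans (hmax _)
  rw [Set.encard_insert_of_notMem hlσ] at hcard
  exact hcard.not_gt (ENat.lt_add_one_iff hfin.encard_lt_top.ne |>.mpr le_rfl)

/-- Generalized Cayley–Hamilton for maximal finite-rank elements: if `a` is a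
maximal finite-rank element of a semisimple complex unital Banach algebra, then
`a · ∏_{α ∈ σ'(a)} (a − α·1) = 0`. -/
theorem cayley_hamilton_maximal {A : Type*} [NormedRing A] [NormedAlgebra ℂ A]
    [CompleteSpace A] (hss : (⊥ : Ideal A).jacobson = ⊥) (a : A)
    (hfin : (spectrum ℂ a \ {0}).Finite)
    (hmax : ∀ x : A, (spectrum ℂ (x * a) \ {0}).encard ≤ (spectrum ℂ a \ {0}).encard) :
    Polynomial.aeval a
      (Polynomial.X * ∏ α ∈ hfin.toFinset, (Polynomial.X - Polynomial.C α)) = 0 :=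
  (Submodule.mem_bot A).mp (hss ▸ cayley_hamilton_maximal_general a hfin hmax)
end

section
/- Let A be a semisimple complex unital Banach algebra and let p_1, …, p_n ∈ A be pairwise orthogonal idempotents (p_i² = p_i and p_i p_j = 0 for i ≠ j) each of rank one, i.e. sup_{x ∈ A} #σ'(x p_i) = 1 for each i. Then e = p_1 + ⋯ + p_n is an idempotent of finite rank at most n: sup_{x ∈ A} #σ'(xe) ≤ n. -/
/-!
The rank of `a` is bounded by the length of the left ideal `A a`. Indeed, if that length is finite,
every nonzero spectral value of `x * a` is an eigenvalue of right multiplication by `x * a` on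
`A a`, and eigenspaces for distinct eigenvalues are independent nonzero left ideals inside `A a`.
Length is subadditive, so it remains to see that `A p` has length at most one when `p` is an
idempotent of rank one. Given `z ≠ 0` in `A p`, semisimplicity provides `b` such that `1` is a
spectral value of `w = b * z`. For `t` different from `0` and `1`, the element
`(w - t) * p = w - t • p` then has the spectral value `1 - t`; it cannot also have the distinct
nonzero spectral value `-t`, and inverting `-t - (w - t • p)` shows that `p` is a left multiple
of `w`, hence of `z`.
-/

section Length

variable {R M ι : Type*} [Ring R] [AddCommGroup M] [Module R M]
  (N : ι → Submodule R M)

theorem length_iSup_le_sum_length [Fintype ι] :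
    Module.length R ↥(⨆ i, N i) ≤ ∑ i, Module.length R (N i) := by
  classical
  rw [Submodule.iSup_eq_range_dfinsupp_lsum, ← Module.length_pi_of_fintype,
    ← (DFinsupp.linearEquivFunOnFintype (R := R) (M := fun i ↦ N i)).length_eq]
  exact Module.length_le_of_surjective _ (LinearMap.surjective_rangeRestrict _)

variable {N}

theorem sum_length_le_length_of_iSupIndep [Fintype ι] (hN : iSupIndep N) :
    ∑ i, Module.length R (N i) ≤ Module.length R M := by
  classical
  rw [← Module.length_pi_of_fintype,
    ← (DFinsupp.linearEquivFunOnFintype (R := R) (M := fun i ↦ N i)).length_eq]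
  exact Module.length_le_of_injective _ hN.dfinsupp_lsum_injective

theorem card_le_length_of_iSupIndep (hN : iSupIndep N) (hne : ∀ i, N i ≠ ⊥) :
    ENat.card ι ≤ Module.length R M := by
  by_cases htop : Module.length R M = ⊤
  · exact htop ▸ le_top
  have := (isFiniteLength_iff_isNoetherian_isArtinian.mp (Module.length_ne_top_iff.mp htop)).1
  have := WellFoundedGT.finite_of_iSupIndep hN hne
  have := Fintype.ofFinite ι
  calc ENat.card ι = ∑ _i : ι, 1 := by simp
    _ ≤ ∑ i, Module.length R (N i) := Finset.sum_le_sum fun i _ ↦ by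
        have := Submodule.nontrivial_iff_ne_bot.mpr (hne i)
        exact Order.one_le_iff_pos.mpr Module.length_pos
    _ ≤ Module.length R M := sum_length_le_length_of_iSupIndep hN

end Length

theorem encard_hasEigenvalue_le_length {R A M : Type*} [CommRing R] [IsDomain R] [Ring A]
    [Algebra R A] [AddCommGroup M] [Module R M] [Module.IsTorsionFree R M] [Module A M]
    [IsScalarTower R A M] (f : Module.End A M) :
    {c : R | Module.End.HasEigenvalue (f.restrictScalars R) c}.encard ≤ Module.length A M := by
  let E (c : R) : Submodule A M := LinearMap.ker (f - c • 1)
  have hE (c : R) :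
      (E c).restrictScalars R = Module.End.eigenspace (f.restrictScalars R) c := by
    ext z
    simp [E, sub_eq_zero]
  have hindep : iSupIndep E := by
    have := Module.End.eigenspaces_iSupIndep (f.restrictScalars R)
    simp only [← hE, iSupIndep_iff_finsetSum_eq_zero_imp_eq_zero] at this ⊢
    exact this
  have hne {c : R} (hc : Module.End.HasEigenvalue (f.restrictScalars R) c) : E c ≠ ⊥ := by
    rwa [Module.End.hasEigenvalue_iff, ← hE, ne_eq, Submodule.restrictScalars_eq_bot_iff] at hc
  exact card_le_length_of_iSupIndep (hindep.comp Subtype.val_injective) fun c ↦ hne c.2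

section RightMultiplication

variable {K A : Type*} [Field K] [Ring A] [Algebra K A] {I : Ideal A}

/-- Right multiplication by an element `y` of a left ideal `I`, as an endomorphism of the left
module `I`. Its eigenvalues detect the nonzero spectral values of `y` when `I` is Artinian. -/
def mulRightEnd (y : I) : Module.End A I :=
  LinearMap.toSpanSingleton A I y ∘ₗ I.subtype

@[simp]
theorem coe_mulRightEnd_apply (y z : I) : (mulRightEnd y z : A) = z * y :=
  rfl

theorem isUnit_algebraMap_sub_of_isRightRegular [IsArtinian A I] {c : K} (hc : c ≠ 0) (y : I)
    (hreg : IsRightRegular (algebraMap K A c - y)) : IsUnit (algebraMap K A c - (y : A)) := by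
  have hcoe (z : I) : (((c • 1 - mulRightEnd y : Module.End A I) z : I) : A) =
      z * (algebraMap K A c - y) := by
    simp [mul_sub, Algebra.smul_def, Algebra.commutes]
  have hinj : Function.Injective (c • 1 - mulRightEnd y : Module.End A I) := fun z₁ z₂ h ↦
    Subtype.ext (hreg (by simpa only [hcoe] using congrArg Subtype.val h))
  obtain ⟨v, hv⟩ := IsArtinian.surjective_of_injective_endomorphism _ hinj y
  have hleft : c⁻¹ • (1 + (v : A)) * (algebraMap K A c - y) = 1 := by
    rw [smul_mul_assoc, add_mul, ← hcoe, hv, one_mul, sub_add_cancel,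
      Algebra.algebraMap_eq_smul_one, inv_smul_smul₀ hc]
  exact ⟨⟨_, _, hreg.mul_eq_one_symm hleft, hleft⟩, rfl⟩

theorem hasEigenvalue_mulRightEnd_of_mem_spectrum [IsArtinian A I] {c : K} (hc : c ≠ 0) {y : I}
    (hy : c ∈ spectrum K (y : A)) :
    Module.End.HasEigenvalue ((mulRightEnd y).restrictScalars K) c := by
  rw [Module.End.hasEigenvalue_iff]
  intro hbot
  refine hy (isUnit_algebraMap_sub_of_isRightRegular hc y ?_)
  rw [isRightRegular_iff_left_eq_zero_of_mul]
  intro z hz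
  have hzy : z * y = c • z := by
    rwa [mul_sub, sub_eq_zero, ← Algebra.commutes, ← Algebra.smul_def, eq_comm] at hz
  have hzI : z ∈ I := by
    rw [← inv_smul_smul₀ hc z, ← hzy, ← smul_mul_assoc]
    exact I.mul_mem_left _ y.2
  have hz' : (⟨z, hzI⟩ : I) ∈ Module.End.eigenspace ((mulRightEnd y).restrictScalars K) c :=
    Module.End.mem_eigenspace_iff.mpr (Subtype.ext hzy)
  rw [hbot, Submodule.mem_bot] at hz'
  exact congrArg Subtype.val hz'

variable (K) in
theorem encard_spectrum_diff_zero_le_length {y : A} (hy : y ∈ I) :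
    (spectrum K y \ {0}).encard ≤ Module.length A I := by
  by_cases htop : Module.length A I = ⊤
  · exact htop ▸ le_top
  have := (isFiniteLength_iff_isNoetherian_isArtinian.mp (Module.length_ne_top_iff.mp htop)).2
  calc (spectrum K y \ {0}).encard
      ≤ {c | Module.End.HasEigenvalue ((mulRightEnd ⟨y, hy⟩).restrictScalars K) c}.encard :=
        Set.encard_le_encard fun _ hc ↦ hasEigenvalue_mulRightEnd_of_mem_spectrum hc.2 hc.1
    _ ≤ Module.length A I := encard_hasEigenvalue_le_length _

end RightMultiplication

/-- The rank of an element `a` of a `K`-algebra: the supremum over `x` of the number of nonzero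
spectral values of `x * a`. -/
noncomputable def spectralRank (K : Type*) {A : Type*} [CommSemiring K] [Ring A] [Algebra K A]
    (a : A) : ℕ∞ :=
  ⨆ x : A, (spectrum K (x * a) \ {0}).encard

section SpectralRank

variable {R A : Type*} [CommRing R] [Ring A] [Algebra R A]

theorem eq_of_mem_spectrum_of_spectralRank_le_one {p : A} (hrk : spectralRank R p ≤ 1) {x : A}
    {c d : R} (hc : c ∈ spectrum R (x * p)) (hc₀ : c ≠ 0) (hd : d ∈ spectrum R (x * p))
    (hd₀ : d ≠ 0) : c = d :=
  Set.encard_le_one_iff.mp (iSup_le_iff.mp hrk x) c d ⟨hc, hc₀⟩ ⟨hd, hd₀⟩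

variable (R) in
theorem exists_one_mem_spectrum_mul (hA : (⊥ : Ideal A).jacobson = ⊥) {z : A} (hz : z ≠ 0) :
    ∃ b : A, (1 : R) ∈ spectrum R (b * z) := by
  by_contra! hunit
  refine hz ((Submodule.mem_bot A).mp (hA ▸ Ideal.mem_jacobson_iff.mpr fun b ↦ ?_))
  obtain ⟨u, hu⟩ := (spectrum.notMem_iff.mp (hunit (-b))).exists_left_inv
  refine ⟨u, (Submodule.mem_bot A).mpr ?_⟩
  rw [← hu, map_one]
  noncomm_ring

end SpectralRank

section RankOneIdempotents

variable {K A : Type*} [Field K] [Ring A] [Algebra K A]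

variable (K) in
theorem spectralRank_le_length_span_singleton (a : A) :
    spectralRank K a ≤ Module.length A (Ideal.span {a}) :=
  iSup_le fun x ↦ encard_spectrum_diff_zero_le_length K
    (Ideal.mul_mem_left _ x (Ideal.mem_span_singleton_self a))

theorem isUnit_add_smul_one_sub {p : A} (hp : IsIdempotentElem p) {s : K} (hs : s ≠ 0) :
    IsUnit (p + s • (1 - p)) := by
  have hmul {a b : K} (hab : a * b = 1) : (p + a • (1 - p)) * (p + b • (1 - p)) = 1 := by
    simp only [mul_add, add_mul, mul_smul_comm, smul_mul_assoc, hp.eq, hp.one_sub.eq,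
      hp.mul_one_sub_self, hp.one_sub_mul_self, smul_zero, add_zero, zero_add, smul_smul, hab,
      one_smul, mul_comm b a, add_sub_cancel]
  exact ⟨⟨_, _, hmul (mul_inv_cancel₀ hs), hmul (inv_mul_cancel₀ hs)⟩, rfl⟩

theorem one_sub_mem_spectrum_sub_smul {p w : A} (hp : IsIdempotentElem p) (hw : w * p = w)
    (hone : (1 : K) ∈ spectrum K w) {t : K} (ht : t ≠ 1) :
    1 - t ∈ spectrum K (w - t • p) := by
  have hfactor : algebraMap K A (1 - t) - (w - t • p) =
      (algebraMap K A 1 - w) * (p + (1 - t) • (1 - p)) := by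
    simp only [map_one, Algebra.algebraMap_eq_smul_one, mul_add, sub_mul, one_mul, hw, mul_sub,
      mul_one, mul_smul_comm, sub_smul, one_smul, smul_sub]
    abel
  obtain ⟨u, hu⟩ := isUnit_add_smul_one_sub hp (sub_ne_zero.mpr ht.symm)
  rw [spectrum.mem_iff] at hone ⊢
  rwa [hfactor, ← hu, Units.isUnit_mul_units]

theorem exists_mul_eq_of_one_mem_spectrum [Nontrivial Kˣ] {p w : A} (hp : IsIdempotentElem p)
    (hrk : spectralRank K p ≤ 1) (hw : w * p = w) (hone : (1 : K) ∈ spectrum K w) :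
    ∃ a : A, a * w = p := by
  obtain ⟨t, ht⟩ := exists_ne (1 : Kˣ)
  have ht₁ : (t : K) ≠ 1 := Units.val_eq_one.not.mpr ht
  have hcut : (w - algebraMap K A t) * p = w - (t : K) • p := by
    rw [sub_mul, hw, Algebra.smul_def]
  have hmem : 1 - (t : K) ∈ spectrum K ((w - algebraMap K A t) * p) :=
    hcut ▸ one_sub_mem_spectrum_sub_smul hp hw hone ht₁
  have hnotMem : -(t : K) ∉ spectrum K ((w - algebraMap K A t) * p) := fun h ↦ by
    have := eq_of_mem_spectrum_of_spectralRank_le_one hrk hmem (sub_ne_zero.mpr ht₁.symm) h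
      (neg_ne_zero.mpr t.ne_zero)
    simp [sub_eq_neg_add] at this
  rw [hcut] at hnotMem
  obtain ⟨v, hv⟩ := (spectrum.notMem_iff.mp hnotMem).exists_left_inv
  have hcancel : (algebraMap K A (-t) - (w - (t : K) • p)) * p = -w := by
    simp only [sub_mul, smul_mul_assoc, hp.eq, hw, map_neg, neg_mul, ← Algebra.smul_def]
    abel
  exact ⟨-v, by rw [neg_mul_comm, ← hcancel, ← mul_assoc, hv, one_mul]⟩

theorem length_span_singleton_le_one [Nontrivial Kˣ] (hA : (⊥ : Ideal A).jacobson = ⊥) {p : A}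
    (hp : IsIdempotentElem p) (hrk : spectralRank K p ≤ 1) :
    Module.length A (Ideal.span {p}) ≤ 1 := by
  rcases subsingleton_or_nontrivial (Ideal.span {p}) with _ | hnontrivial
  · simp
  refine (Module.length_eq_one_iff.mpr
    (isSimpleModule_iff_toSpanSingleton_surjective.mpr ⟨hnontrivial, ?_⟩)).le
  rintro ⟨z, hz⟩ hz₀ ⟨y, hy⟩
  obtain ⟨x, rfl⟩ := Ideal.mem_span_singleton'.mp hz
  obtain ⟨y, rfl⟩ := Ideal.mem_span_singleton'.mp hy
  obtain ⟨b, hb⟩ := exists_one_mem_spectrum_mul K hA (by simpa using hz₀ : x * p ≠ 0)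
  obtain ⟨a, ha⟩ :=
    exists_mul_eq_of_one_mem_spectrum hp hrk (by simp only [mul_assoc, hp.eq]) hb
  exact ⟨y * a * b, Subtype.ext (by simpa [mul_assoc] using congrArg (y * ·) ha)⟩

theorem spectralRank_sum_le_card {ι : Type*} [Fintype ι] [Nontrivial Kˣ]
    (hA : (⊥ : Ideal A).jacobson = ⊥) {p : ι → A} (hp : ∀ i, IsIdempotentElem (p i))
    (hrk : ∀ i, spectralRank K (p i) ≤ 1) : spectralRank K (∑ i, p i) ≤ Fintype.card ι := by
  have hle : Ideal.span {∑ i, p i} ≤ ⨆ i, Ideal.span {p i} :=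
    (Ideal.span_singleton_le_iff_mem _).mpr <| Submodule.sum_mem _ fun i _ ↦
      Submodule.mem_iSup_of_mem i (Ideal.mem_span_singleton_self _)
  calc spectralRank K (∑ i, p i)
      ≤ Module.length A (Ideal.span {∑ i, p i}) := spectralRank_le_length_span_singleton K _
    _ ≤ Module.length A ↥(⨆ i, Ideal.span {p i}) :=
        Module.length_le_of_injective _ (Submodule.inclusion_injective hle)
    _ ≤ ∑ i, Module.length A (Ideal.span {p i}) := length_iSup_le_sum_length _
    _ ≤ ∑ _i : ι, 1 :=
        Finset.sum_le_sum fun i _ ↦ length_span_singleton_le_one hA (hp i) (hrk i)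
    _ = Fintype.card ι := by simp

theorem sum_orthogonal_rank_one_general {ι : Type*} [Fintype ι] [Nontrivial Kˣ]
    (hA : (⊥ : Ideal A).jacobson = ⊥) {p : ι → A} (hp : OrthogonalIdempotents p)
    (hrk : ∀ i, spectralRank K (p i) ≤ 1) :
    IsIdempotentElem (∑ i, p i) ∧ spectralRank K (∑ i, p i) ≤ Fintype.card ι :=
  ⟨hp.isIdempotentElem_sum, spectralRank_sum_le_card hA hp.idem hrk⟩

end RankOneIdempotents

/-- A sum of pairwise orthogonal rank-one idempotents of a semisimple complex
unital Banach algebra is an idempotent of rank at most `n`. -/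
theorem sum_orthogonal_rank_one {A : Type*} [NormedRing A] [NormedAlgebra ℂ A]
    [CompleteSpace A] (hss : (⊥ : Ideal A).jacobson = ⊥) (N : ℕ) (p : Fin N → A)
    (hidem : ∀ i, p i * p i = p i) (horth : ∀ i j, i ≠ j → p i * p j = 0)
    (hrk : ∀ i, (⨆ x : A, (spectrum ℂ (x * p i) \ {0}).encard) = 1) :
    (∑ i, p i) * (∑ i, p i) = ∑ i, p i ∧
      (⨆ x : A, (spectrum ℂ (x * (∑ i, p i)) \ {0}).encard) ≤ (N : ℕ∞) := by
  have : Nontrivial ℂˣ := ⟨Units.mk0 2 two_ne_zero, 1, by simp [Units.ext_iff]⟩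
  simpa only [IsIdempotentElem, spectralRank, Fintype.card_fin] using
    sum_orthogonal_rank_one_general hss ⟨hidem, fun i j ↦ horth i j⟩ fun i ↦ (hrk i).le
end
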